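/- Let F ∈ ℓ¹(ℤ^d) and G ∈ ℓ²(ℤ^d) with G ≥ 0, and suppose (F * G)(x) = δ_{0,x} for all x ∈ ℤ^d. If ∑_{x∈ℤ^d} G(x) = ∞ then ∑_{x∈ℤ^d} F(x) = 0. -/

import Mathlib

open Filter Topology in
/-- Neumann series construction of a slowly varying majorant. -/
theorem aux_h {X : Type*} [AddCommGroup X] (b g : X → ENNReal) (hb : ∑' z, b z ≤ 2⁻¹)
    (hg1 : ∀ x, g x ≤ 1) (hgs : ∑' x, g x ≠ ⊤) (A : Set X) (c : ENNReal)
    (hA : ∀ z ∈ A, ∀ x, g (x + z) ≤ c * g x ∧ g x ≤ c * g (x + z)) :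
    ∃ h : X → ENNReal, (∀ x, g x ≤ h x) ∧ (∀ x, h x ≤ 2) ∧ (∑' x, h x ≠ ⊤) ∧
      (∀ x, ∑' z, b z * h (x + z) ≤ h x) ∧
      (∀ z ∈ A, ∀ x, h (x + z) ≤ c * h x ∧ h x ≤ c * h (x + z)) := by
  let T : (X → ENNReal) → (X → ENNReal) := fun f x => ∑' z, b z * f (x + z)
  let u : ℕ → X → ENNReal := fun k => T^[k] g
  have u0 : u 0 = g := rfl
  have us : ∀ k, u (k + 1) = T (u k) := fun k => Function.iterate_succ_apply' T k g
  have usx : ∀ k x, u (k + 1) x = ∑' z, b z * u k (x + z) := fun k x => by rw [us]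
  have h1 : ∀ k x, u k x ≤ 2⁻¹ ^ k := by
    intro k
    induction k with
    | zero => intro x; simpa [u0] using hg1 x
    | succ k ih =>
      intro x
      rw [usx]
      calc ∑' z, b z * u k (x + z) ≤ ∑' z, b z * 2⁻¹ ^ k :=
            ENNReal.tsum_le_tsum fun z => by gcongr; exact ih _
        _ = (∑' z, b z) * 2⁻¹ ^ k := ENNReal.tsum_mul_right
        _ ≤ 2⁻¹ * 2⁻¹ ^ k := by gcongr
        _ = _ := by rw [pow_succ']
  have h2 : ∀ k, ∑' x, u k x ≤ 2⁻¹ ^ k * ∑' x, g x := by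
    intro k
    induction k with
    | zero => simp [u0]
    | succ k ih =>
      simp_rw [usx]
      rw [ENNReal.tsum_comm]
      have : ∀ z, ∑' x, b z * u k (x + z) = b z * ∑' x, u k x := by
        intro z
        rw [ENNReal.tsum_mul_left]
        congr 1
        exact (Equiv.addRight z).tsum_eq (u k)
      simp_rw [this]
      rw [ENNReal.tsum_mul_right, pow_succ', mul_assoc]
      gcongr
  have h3 : ∀ k, ∀ z ∈ A, ∀ x, u k (x + z) ≤ c * u k x ∧ u k x ≤ c * u k (x + z) := by
    intro k
    induction k with
    | zero => simpa [u0] using hA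
    | succ k ih =>
      intro z hz x
      simp_rw [usx]
      rw [← ENNReal.tsum_mul_left, ← ENNReal.tsum_mul_left]
      constructor
      · refine ENNReal.tsum_le_tsum fun w => ?_
        rw [mul_left_comm, add_right_comm]
        gcongr
        exact (ih z hz _).1
      · refine ENNReal.tsum_le_tsum fun w => ?_
        rw [mul_left_comm, add_right_comm x z w]
        gcongr
        exact (ih z hz _).2
  have geo : ∑' k : ℕ, (2⁻¹ : ENNReal) ^ k = 2 := by
    rw [ENNReal.tsum_geometric, ENNReal.one_sub_inv_two, inv_inv]
  refine ⟨fun x => ∑' k, u k x, ?_, ?_, ?_, ?_, ?_⟩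
  · intro x
    exact ENNReal.le_tsum (f := fun k => u k x) 0
  · intro x
    rw [← geo]
    exact ENNReal.tsum_le_tsum fun k => h1 k x
  · rw [ENNReal.tsum_comm]
    refine ne_top_of_le_ne_top ?_ (ENNReal.tsum_le_tsum h2)
    rw [ENNReal.tsum_mul_right, geo]
    exact ENNReal.mul_ne_top (by simp) hgs
  · intro x
    simp_rw [← ENNReal.tsum_mul_left]
    rw [ENNReal.tsum_comm]
    simp_rw [← usx]
    exact ENNReal.tsum_comp_le_tsum_of_injective (f := fun k : ℕ => k + 1)
      (add_left_injective 1) (fun k => u k x)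
  · intro z hz x
    simp only
    rw [← ENNReal.tsum_mul_left, ← ENNReal.tsum_mul_left]
    exact ⟨ENNReal.tsum_le_tsum fun k => (h3 k z hz x).1,
      ENNReal.tsum_le_tsum fun k => (h3 k z hz x).2⟩

/-- Pairing the convolution equation with a test function. -/
theorem aux_pair {X : Type*} [AddCommGroup X] [DecidableEq X] (F G h : X → ℝ) (C s : ℝ)
    (hF : Summable fun x => |F x|) (hG : ∀ x, 0 ≤ G x) (hGC : ∀ x, G x ≤ C)
    (hh : ∀ x, 0 ≤ h x) (hhs : Summable h)
    (hconv : ∀ x : X, ∑' y, F (x - y) * G y = if x = 0 then 1 else 0)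
    (hP : ∀ y, |∑' z, F z * h (y + z) - s * h y| ≤ |s| / 2 * h y) :
    Summable (fun y => G y * h y) ∧ |s| / 2 * ∑' y, G y * h y ≤ h 0 := by
  have hGh : Summable (fun y => G y * h y) :=
    Summable.of_nonneg_of_le (fun y => mul_nonneg (hG y) (hh y))
      (fun y => mul_le_mul_of_nonneg_right (hGC y) (hh y)) (hhs.mul_left C)
  refine ⟨hGh, ?_⟩
  have hprod : Summable (fun p : X × X => h p.1 * |F p.2|) :=
    hhs.mul_of_nonneg hF hh (fun x => abs_nonneg _)
  let e : X × X ≃ X × X :=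
    { toFun := fun p => (p.1, p.1 - p.2)
      invFun := fun p => (p.1, p.1 - p.2)
      left_inv := fun p => by simp
      right_inv := fun p => by simp }
  have hK : Summable (fun p : X × X => h p.1 * (F (p.1 - p.2) * G p.2)) := by
    have h1 : Summable (fun p : X × X => C * (h p.1 * |F (p.1 - p.2)|)) :=
      ((e.summable_iff (f := fun p : X × X => h p.1 * |F p.2|)).2 hprod).mul_left C
    refine Summable.of_norm_bounded h1 fun p => ?_
    rw [Real.norm_eq_abs, abs_mul, abs_mul, abs_of_nonneg (hh _), abs_of_nonneg (hG _)]
    have := mul_le_mul_of_nonneg_left (hGC p.2) (mul_nonneg (hh p.1) (abs_nonneg (F (p.1 - p.2))))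
    linarith
  have hcomm := Summable.tsum_comm (f := fun x y => h x * (F (x - y) * G y)) hK
  have hl : ∑' x, ∑' y, h x * (F (x - y) * G y) = h 0 := by
    simp_rw [tsum_mul_left, hconv]
    rw [tsum_eq_single 0]
    · simp
    · intro x hx; simp [hx]
  have hr : ∀ y, ∑' x, h x * (F (x - y) * G y) = G y * ∑' z, F z * h (y + z) := by
    intro y
    rw [← tsum_mul_left, ← (Equiv.addLeft y).tsum_eq]
    refine tsum_congr fun z => ?_
    simp
    ring
  rw [hl] at hcomm
  simp_rw [hr] at hcomm
  set P : X → ℝ := fun y => ∑' z, F z * h (y + z) with hPdef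
  have hd : ∀ y, |G y * P y - s * (G y * h y)| ≤ |s| / 2 * (G y * h y) := by
    intro y
    have := mul_le_mul_of_nonneg_left (hP y) (hG y)
    rw [show G y * P y - s * (G y * h y) = G y * (P y - s * h y) by ring, abs_mul,
      abs_of_nonneg (hG y)]
    linarith
  have hds : Summable (fun y => G y * P y - s * (G y * h y)) :=
    Summable.of_norm_bounded (hGh.mul_left _) hd
  have hGP : Summable (fun y => G y * P y) := by
    have := hds.add (hGh.mul_left s)
    simpa using this
  have h3 : |∑' y, (G y * P y - s * (G y * h y))| ≤ |s| / 2 * ∑' y, G y * h y := by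
    rw [← tsum_mul_left]
    rw [← Real.norm_eq_abs]
    exact tsum_of_norm_bounded (hGh.mul_left (|s| / 2)).hasSum
      (fun y => (Real.norm_eq_abs _).le.trans (hd y))
  rw [hGP.tsum_sub (hGh.mul_left s), tsum_mul_left, show ∑' y, G y * P y = h 0 from hcomm] at h3
  have hS : 0 ≤ ∑' y, G y * h y := tsum_nonneg fun y => mul_nonneg (hG y) (hh y)
  set S := ∑' y, G y * h y
  have h4 : |s| * S ≤ |h 0 - s * S| + |h 0| := by
    have : |s * S| ≤ |h 0 - s * S| + |h 0| := by
      have := abs_sub_le (s * S) (h 0) 0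
      rw [abs_sub_comm (s * S) (h 0)] at this
      simpa using this
    rwa [abs_mul, abs_of_nonneg hS] at this
  rw [abs_of_nonneg (hh 0)] at h4
  linarith

/-- The ℓ¹ norm on the lattice. -/
noncomputable def nrm {d : ℕ} (x : Fin d → ℤ) : ℝ := ∑ i, |(x i : ℝ)|

theorem nrm_nonneg {d : ℕ} (x : Fin d → ℤ) : 0 ≤ nrm x :=
  Finset.sum_nonneg fun _ _ => abs_nonneg _

theorem nrm_add {d : ℕ} (x z : Fin d → ℤ) : nrm (x + z) ≤ nrm x + nrm z := by
  unfold nrm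
  rw [← Finset.sum_add_distrib]
  refine Finset.sum_le_sum fun i _ => ?_
  simpa using abs_add_le (x i : ℝ) (z i)

theorem nrm_add' {d : ℕ} (x z : Fin d → ℤ) : nrm x ≤ nrm (x + z) + nrm z := by
  unfold nrm
  rw [← Finset.sum_add_distrib]
  refine Finset.sum_le_sum fun i _ => ?_
  simpa using abs_sub (x i + z i : ℝ) (z i)

theorem summable_exp1 (η : ℝ) (hη : 0 < η) : Summable fun n : ℤ => Real.exp (-η * |(n : ℝ)|) := by
  have h : Summable fun n : ℕ => Real.exp (-η * (n : ℝ)) := by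
    have := Real.summable_exp_nat_mul_iff.2 (neg_lt_zero.2 hη)
    refine this.congr fun n => ?_
    rw [mul_comm]
  refine Summable.of_nat_of_neg ?_ ?_ <;> simpa using h

theorem summable_exp (η : ℝ) (hη : 0 < η) (d : ℕ) :
    Summable fun x : Fin d → ℤ => Real.exp (-η * nrm x) := by
  induction d with
  | zero => exact Summable.of_finite
  | succ d ih =>
    have := (summable_exp1 η hη).mul_of_nonneg ih (fun _ => (Real.exp_pos _).le)
      (fun _ => (Real.exp_pos _).le)
    rw [← (Fin.consEquiv (fun _ : Fin (d + 1) => ℤ)).summable_iff]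
    refine this.congr fun p => ?_
    rw [← Real.exp_add]
    simp [nrm, Fin.sum_univ_succ, Fin.consEquiv]
    ring

/-- The real-valued test function. -/
theorem aux_real (d : ℕ) (F : (Fin d → ℤ) → ℝ) (hF : Summable fun x => |F x|)
    (hs : ∑' x, F x ≠ 0) : ∃ η₀ > 0, ∀ η, 0 < η → η < η₀ → ∃ h : (Fin d → ℤ) → ℝ,
      (∀ x, Real.exp (-η * nrm x) ≤ h x) ∧ (∀ x, h x ≤ 2) ∧ Summable h ∧
      ∀ y, |∑' z, F z * h (y + z) - (∑' x, F x) * h y| ≤ |∑' x, F x| / 2 * h y := by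
  classical
  set s := ∑' x, F x with hsdef
  have hspos : 0 < |s| := abs_pos.2 hs
  set δ := |s| / 16 with hδ
  have hδpos : 0 < δ := by positivity
  -- finite set with small tail
  obtain ⟨A, hAt⟩ : ∃ A : Finset (Fin d → ℤ), ∑' x, |F x| - ∑ x ∈ A, |F x| ≤ δ := by
    have := (hF.hasSum.eventually (lt_mem_nhds (show ∑' x, |F x| - δ < ∑' x, |F x| by linarith))).exists
    obtain ⟨A, hA⟩ := this
    exact ⟨A, by linarith⟩
  let t : (Fin d → ℤ) → ℝ := fun x => if x ∈ A then 0 else |F x|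
  have ht0 : ∀ x, 0 ≤ t x := fun x => by simp only [t]; split_ifs <;> simp
  have htF : ∀ x, t x ≤ |F x| := fun x => by simp only [t]; split_ifs <;> simp
  have hts : Summable t := Summable.of_nonneg_of_le ht0 htF hF
  have htsum : ∑' x, t x ≤ δ := by
    have h1 : ∑' x, (|F x| - t x) = ∑ x ∈ A, |F x| := by
      rw [tsum_eq_sum (s := A)]
      · refine Finset.sum_congr rfl fun x hx => ?_
        simp [t, hx]
      · intro x hx
        simp [t, hx]
    rw [hF.tsum_sub hts] at h1
    linarith
  set M := ∑' x, |F x| with hM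
  have hM0 : 0 ≤ M := tsum_nonneg fun _ => abs_nonneg _
  set R := ∑ z ∈ A, nrm z with hR
  have hR0 : 0 ≤ R := Finset.sum_nonneg fun _ _ => nrm_nonneg _
  have hAR : ∀ z ∈ A, nrm z ≤ R := fun z hz =>
    Finset.single_le_sum (f := fun z => nrm z) (fun _ _ => nrm_nonneg _) hz
  -- choose η₀
  have hcont : Filter.Tendsto (fun η : ℝ => M * (Real.exp (η * R) - 1)) (nhds 0) (nhds 0) := by
    have : Continuous (fun η : ℝ => M * (Real.exp (η * R) - 1)) := by fun_prop
    simpa using this.tendsto 0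
  obtain ⟨η₀, hη₀, hη⟩ := Metric.eventually_nhds_iff.1 (hcont.eventually (gt_mem_nhds hδpos))
  refine ⟨η₀, hη₀, fun η hη1 hη2 => ?_⟩
  have hcM : M * (Real.exp (η * R) - 1) < δ := hη (by simpa [abs_of_pos hη1] using hη2)
  set c := Real.exp (η * R) with hc
  have hc1 : 1 ≤ c := Real.one_le_exp (by positivity)
  have hbsum : ∑' z, ENNReal.ofReal (t z / (2 * δ)) ≤ 2⁻¹ := by
    rw [← ENNReal.ofReal_tsum_of_nonneg (fun z => div_nonneg (ht0 z) (by positivity))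
      (hts.div_const _), tsum_div_const]
    have : (2⁻¹ : ENNReal) = ENNReal.ofReal (2⁻¹) := by
      rw [ENNReal.ofReal_inv_of_pos (by norm_num)]; simp
    rw [this]
    apply ENNReal.ofReal_le_ofReal
    rw [div_le_iff₀ (by positivity)]
    linarith
  obtain ⟨H, hH1, hH2, hH3, hH4, hH5⟩ := aux_h (fun z => ENNReal.ofReal (t z / (2 * δ)))
    (fun x => ENNReal.ofReal (Real.exp (-η * nrm x))) hbsum
    (fun x => by
      rw [ENNReal.ofReal_le_one, Real.exp_le_one_iff]
      have := mul_nonneg hη1.le (nrm_nonneg x)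
      linarith)
    (summable_exp η hη1 d).tsum_ofReal_ne_top (A : Set _) (ENNReal.ofReal c)
    (by
      intro z hz x
      rw [← ENNReal.ofReal_mul (by positivity), ← ENNReal.ofReal_mul (by positivity), hc,
        ← Real.exp_add, ← Real.exp_add]
      have h1 := nrm_add x z
      have h2 := nrm_add' x z
      have h3 := hAR z hz
      constructor
      · apply ENNReal.ofReal_le_ofReal
        apply Real.exp_le_exp.2
        nlinarith
      · apply ENNReal.ofReal_le_ofReal
        apply Real.exp_le_exp.2
        nlinarith)
  have hHt : ∀ x, H x ≠ ⊤ := fun x => ne_top_of_le_ne_top (by simp) (hH2 x)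
  let h : (Fin d → ℤ) → ℝ := fun x => (H x).toReal
  have hh0 : ∀ x, 0 ≤ h x := fun x => ENNReal.toReal_nonneg
  have hh2 : ∀ x, h x ≤ 2 := fun x => by
    simpa using ENNReal.toReal_mono (by simp) (hH2 x)
  have hhA : ∀ z ∈ A, ∀ x, h (x + z) ≤ c * h x ∧ h x ≤ c * h (x + z) := by
    intro z hz x
    have hcpos : 0 ≤ c := by linarith
    have h5 := hH5 z hz x
    constructor
    · have := ENNReal.toReal_mono (ENNReal.mul_ne_top (by simp) (hHt _)) h5.1
      rwa [ENNReal.toReal_mul, ENNReal.toReal_ofReal hcpos] at this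
    · have := ENNReal.toReal_mono (ENNReal.mul_ne_top (by simp) (hHt _)) h5.2
      rwa [ENNReal.toReal_mul, ENNReal.toReal_ofReal hcpos] at this
  have hth : ∀ y, Summable (fun z => t z * h (y + z)) := fun y =>
    Summable.of_nonneg_of_le (fun z => mul_nonneg (ht0 z) (hh0 _))
      (fun z => mul_le_mul_of_nonneg_left (hh2 _) (ht0 z)) (hts.mul_right 2)
  have htail : ∀ y, ∑' z, t z * h (y + z) ≤ 2 * δ * h y := by
    intro y
    have h4 := ENNReal.toReal_mono (hHt y) (hH4 y)
    rw [ENNReal.tsum_toReal_eq (fun z => ENNReal.mul_ne_top (by simp) (hHt _))] at h4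
    have : ∀ z, (ENNReal.ofReal (t z / (2 * δ)) * H (y + z)).toReal
        = (t z * h (y + z)) / (2 * δ) := by
      intro z
      rw [ENNReal.toReal_mul, ENNReal.toReal_ofReal (div_nonneg (ht0 z) (by positivity))]
      ring
    simp_rw [this] at h4
    rw [tsum_div_const, div_le_iff₀ (by positivity)] at h4
    linarith
  refine ⟨h, ?_, hh2, ENNReal.summable_toReal hH3, ?_⟩
  · intro x
    have := ENNReal.toReal_mono (hHt x) (hH1 x)
    rwa [ENNReal.toReal_ofReal (Real.exp_pos _).le] at this
  intro y
  have hFs : Summable F := hF.of_abs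
  have hFh : Summable (fun z => F z * h (y + z)) := by
    refine Summable.of_norm_bounded (hF.mul_right 2) fun z => ?_
    rw [Real.norm_eq_abs, abs_mul, abs_of_nonneg (hh0 _)]
    exact mul_le_mul_of_nonneg_left (hh2 _) (abs_nonneg _)
  rw [hsdef, ← tsum_mul_right, ← hFh.tsum_sub (hFs.mul_right _), ← hsdef]
  have hbs := ((hF.mul_right ((c - 1) * h y)).add (hth y)).add (hts.mul_right (h y))
  have hbound : ∀ z, ‖F z * h (y + z) - F z * h y‖ ≤
      |F z| * ((c - 1) * h y) + t z * h (y + z) + t z * h y := by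
    intro z
    rw [← mul_sub, Real.norm_eq_abs, abs_mul]
    by_cases hz : z ∈ A
    · obtain ⟨h1, h2⟩ := hhA z hz y
      have h3 : |h (y + z) - h y| ≤ (c - 1) * h y := by
        rw [abs_le]
        constructor
        · by_cases h4 : h y ≤ h (y + z)
          · nlinarith [hh0 y]
          · push Not at h4
            nlinarith [hh0 y]
        · linarith
      have h4 : t z = 0 := by simp [t, hz]
      rw [h4]
      have := mul_le_mul_of_nonneg_left h3 (abs_nonneg (F z))
      linarith
    · have h4 : t z = |F z| := by simp [t, hz]
      rw [h4]
      have h3 : |h (y + z) - h y| ≤ h (y + z) + h y := by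
        rw [abs_le]
        constructor <;> linarith [hh0 y, hh0 (y + z)]
      have := mul_le_mul_of_nonneg_left h3 (abs_nonneg (F z))
      have h5 : 0 ≤ |F z| * ((c - 1) * h y) :=
        mul_nonneg (abs_nonneg _) (mul_nonneg (by linarith) (hh0 y))
      linarith
  have hfin := tsum_of_norm_bounded hbs.hasSum hbound
  rw [Real.norm_eq_abs, Summable.tsum_add ((hF.mul_right _).add (hth y)) (hts.mul_right _),
    Summable.tsum_add (hF.mul_right _) (hth y), tsum_mul_right, tsum_mul_right] at hfin
  refine hfin.trans ?_
  have e1 := htail y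
  have e2 := mul_le_mul_of_nonneg_right htsum (hh0 y)
  have e3 := mul_le_mul_of_nonneg_right hcM.le (hh0 y)
  have e4 : δ * h y = |s| * h y / 16 := by rw [hδ]; ring
  have e5 : 0 ≤ |s| * h y := mul_nonneg hspos.le (hh0 y)
  linarith

/-- If `F ∈ ℓ¹(ℤ^d)`, `G ∈ ℓ²(ℤ^d)` with `G ≥ 0`, `(F*G)(x) = δ_{0,x}` for all
`x`, and `∑ G = ∞` (i.e. the nonnegative function `G` is not summable), then `∑ F = 0`. -/
theorem stmt0 (d : ℕ) (F G : (Fin d → ℤ) → ℝ)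
    (hF : Summable (fun x => |F x|))
    (hG2 : Summable (fun x => (G x) ^ 2))
    (hGpos : ∀ x, 0 ≤ G x)
    (hconv : ∀ x : Fin d → ℤ, ∑' y, F (x - y) * G y = if x = 0 then 1 else 0)
    (hdiv : ¬ Summable G) :
    ∑' x, F x = 0 := by
  by_contra hs
  apply hdiv
  obtain ⟨η₀, hη₀, hη⟩ := aux_real d F hF hs
  set s := ∑' x, F x
  have hspos : 0 < |s| := abs_pos.2 hs
  have hGC : ∀ x, G x ≤ ∑' x, (G x) ^ 2 + 1 := by
    intro x
    have := hG2.le_tsum x (fun _ _ => sq_nonneg _)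
    nlinarith [sq_nonneg (G x - 1), hGpos x]
  refine summable_of_sum_le (c := 4 / |s|) hGpos fun S => ?_
  have key : ∀ η, 0 < η → η < η₀ → ∑ x ∈ S, G x * Real.exp (-η * nrm x) ≤ 4 / |s| := by
    intro η h1 h2
    obtain ⟨h, hg, hh2, hhs, hP⟩ := hη η h1 h2
    have hh0 : ∀ x, 0 ≤ h x := fun x => (Real.exp_pos _).le.trans (hg x)
    obtain ⟨hsum, hle⟩ := aux_pair F G h _ s hF hGpos hGC hh0 hhs
      (fun x => by rw [hconv x]) hP
    have h3 : ∑ x ∈ S, G x * Real.exp (-η * nrm x) ≤ ∑' y, G y * h y :=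
      (Finset.sum_le_sum fun x _ => mul_le_mul_of_nonneg_left (hg x) (hGpos x)).trans
        (hsum.sum_le_tsum S fun x _ => mul_nonneg (hGpos x) (hh0 x))
    refine h3.trans ?_
    rw [le_div_iff₀ hspos]
    linarith [hh2 0]
  have hlim : Filter.Tendsto (fun η : ℝ => ∑ x ∈ S, G x * Real.exp (-η * nrm x))
      (nhdsWithin 0 (Set.Ioi 0)) (nhds (∑ x ∈ S, G x)) := by
    have hc : Continuous (fun η : ℝ => ∑ x ∈ S, G x * Real.exp (-η * nrm x)) := by fun_prop
    have := hc.tendsto 0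
    simp only [neg_zero, zero_mul, Real.exp_zero, mul_one] at this
    exact this.mono_left nhdsWithin_le_nhds
  refine le_of_tendsto hlim ?_
  filter_upwards [Ioo_mem_nhdsGT hη₀] with η h
  exact key η h.1 h.2
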